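/- Let $X$ be a Hausdorff topological space and let $p_0, p_1, p^*$ be three distinct points of $X$. Let $f \colon [0,1] \to X$ be a loop based at $p_1$ (i.e. $f(0) = f(1) = p_1$) such that $p_0$ is not in the image of $f$ and the preimage $f^{-1}(\{p^*\})$ is a singleton. If $f$ is null-homotopic relative to its endpoints (i.e. homotopic rel $\{0,1\}$ to the constant loop at $p_1$), then there exists a loop $f' \colon [0,1] \to X$ based at $p_1$ whose image is contained in $X \setminus \{p_0, p^*\}$, and a homotopy rel $\{0,1\}$ between $f$ and $f'$ whose image is contained in $X \setminus \{p_0\}$. -/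

import Mathlib

/-!
Let `F` be the null-homotopy, a map on the unit square with `f` on the bottom side, and let `U` be
the component of `F⁻¹(X ∖ {p*})` containing the other three sides. Redefining `F` to be `p*` off `U`
keeps it continuous and does not change it on the bottom side, so we may assume that
`U = F⁻¹(X ∖ {p*})`. Inside `U`, join the compact set `F⁻¹(p₀)` to the top right corner by a
compact connected set and cover the result by the faces of a fine grid. Together with the outside of
the square, these faces form a set `L` of faces that can be built by successively adding faces
sharing an edge with earlier ones.

The fundamental groupoid of `X ∖ {p₀}` maps faithfully to a group `G`, so the grid edges away
from `L` acquire values in `G` with trivial product around each face off `L`. Such values extend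
over `L` one face at a time, because the shared edge can be given any value; hence they come from a
potential `g` on the vertices. Let `S` be the set of vertices whose images can be reached from that
of the bottom vertex before `s₀`, where `f s₀ = p*`, by a path in `X ∖ {p₀, p*}` whose value is the
one predicted by `g`. Membership in `S` does not change along edges whose images avoid `p*`: those
bordering `L`, those on the left side, and those on the bottom side except for the one through `s₀`.
Counting modulo 2, it cannot change along that edge either, which yields a path in
`X ∖ {p₀, p*}` homotopic in `X ∖ {p₀}` to the piece of `f` through `s₀`.
-/

namespace PointRemoval

open Set Topology

/-- The unit edges of the grid with vertex set `ℕ × ℕ`: `horiz i j` joins `(i, j)` to `(i + 1, j)`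
and `vert i j` joins `(i, j)` to `(i, j + 1)`. -/
inductive Edge
  | horiz (i j : ℕ)
  | vert (i j : ℕ)

namespace Edge

/-- The initial vertex of an edge. -/
def src : Edge → ℕ × ℕ
  | horiz i j => (i, j)
  | vert i j => (i, j)

/-- The final vertex of an edge. -/
def tgt : Edge → ℕ × ℕ
  | horiz i j => (i + 1, j)
  | vert i j => (i, j + 1)

end Edge

/-- The four edges of the unit face whose lower left corner is the vertex `τ`; faces of the grid are
encoded by that corner throughout. -/
def faceEdges (τ : ℕ × ℕ) : Set Edge :=
  {.horiz τ.1 τ.2, .horiz τ.1 (τ.2 + 1), .vert τ.1 τ.2, .vert (τ.1 + 1) τ.2}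

@[simp]
lemma horiz_mem_faceEdges {i j : ℕ} {τ : ℕ × ℕ} :
    .horiz i j ∈ faceEdges τ ↔ i = τ.1 ∧ (j = τ.2 ∨ j = τ.2 + 1) := by
  simp [faceEdges, and_or_left]

@[simp]
lemma vert_mem_faceEdges {i j : ℕ} {τ : ℕ × ℕ} :
    .vert i j ∈ faceEdges τ ↔ (i = τ.1 ∨ i = τ.1 + 1) ∧ j = τ.2 := by
  simp [faceEdges, or_and_right]

lemma eq_or_eq_of_mem_faceEdges {e : Edge} {σ τ ρ : ℕ × ℕ} (hστ : σ ≠ τ) (hσ : e ∈ faceEdges σ)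
    (hτ : e ∈ faceEdges τ) (hρ : e ∈ faceEdges ρ) : ρ = σ ∨ ρ = τ := by
  obtain ⟨i, j⟩ := σ
  obtain ⟨i', j'⟩ := τ
  obtain ⟨i'', j''⟩ := ρ
  cases e <;>
    simp only [horiz_mem_faceEdges, vert_mem_faceEdges, Prod.mk.injEq, ne_eq] at * <;> omega

section Potential

variable {G : Type*} [Group G]

/-- A `G`-valued function on edges has trivial holonomy around the face `τ`. Values along a path
multiply from right to left, as morphisms of `CategoryTheory.SingleObj G` do. -/
def Flat (a : Edge → G) (τ : ℕ × ℕ) : Prop :=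
  a (.vert (τ.1 + 1) τ.2) * a (.horiz τ.1 τ.2) = a (.horiz τ.1 (τ.2 + 1)) * a (.vert τ.1 τ.2)

/-- `g` is a primitive of the edge function `a` along every edge of a face outside `L`. -/
def IsPotentialOff (L : Set (ℕ × ℕ)) (a : Edge → G) (g : ℕ × ℕ → G) : Prop :=
  ∀ τ ∉ L, ∀ e ∈ faceEdges τ, g e.tgt = a e * g e.src

lemma Flat.congr {a b : Edge → G} {τ : ℕ × ℕ} (h : Flat a τ) (hab : EqOn a b (faceEdges τ)) :
    Flat b τ := by
  unfold Flat at *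
  rwa [← hab (by simp), ← hab (by simp), ← hab (by simp), ← hab (by simp)]

lemma exists_flat_update [DecidableEq Edge] (a : Edge → G) {τ : ℕ × ℕ} {e : Edge}
    (he : e ∈ faceEdges τ) :
    ∃ x, Flat (Function.update a e x) τ := by
  obtain rfl | rfl | rfl | rfl := he
  · use (a (.vert (τ.1 + 1) τ.2))⁻¹ * (a (.horiz τ.1 (τ.2 + 1)) * a (.vert τ.1 τ.2))
    simp [Flat]
  · use a (.vert (τ.1 + 1) τ.2) * a (.horiz τ.1 τ.2) * (a (.vert τ.1 τ.2))⁻¹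
    simp [Flat]
  · use (a (.horiz τ.1 (τ.2 + 1)))⁻¹ * (a (.vert (τ.1 + 1) τ.2) * a (.horiz τ.1 τ.2))
    simp [Flat]
  · use a (.horiz τ.1 (τ.2 + 1)) * a (.vert τ.1 τ.2) * (a (.horiz τ.1 τ.2))⁻¹
    simp [Flat]

/-- The faces outside the `N × N` box. -/
def outside (N : ℕ) : Set (ℕ × ℕ) := {τ | N ≤ τ.1 ∨ N ≤ τ.2}

lemma exists_isPotentialOff_outside {N : ℕ} {a : Edge → G} (ha : ∀ τ ∉ outside N, Flat a τ) :
    ∃ g, IsPotentialOff (outside N) a g := by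
  let bottom : ℕ → G := Nat.rec 1 fun i x ↦ a (.horiz i 0) * x
  let g (v : ℕ × ℕ) : G := Nat.rec (bottom v.1) (fun j x ↦ a (.vert v.1 j) * x) v.2
  have horiz_step (j : ℕ) (hj : j ≤ N) (i : ℕ) (hi : i < N) :
      g (i + 1, j) = a (.horiz i j) * g (i, j) := by
    induction j with
    | zero => rfl
    | succ j ih =>
      calc g (i + 1, j + 1) = a (.vert (i + 1) j) * g (i + 1, j) := rfl
        _ = a (.vert (i + 1) j) * a (.horiz i j) * g (i, j) := by rw [ih (by omega), mul_assoc]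
        _ = a (.horiz i (j + 1)) * a (.vert i j) * g (i, j) := by
          rw [ha (i, j) (by simp [outside]; omega)]
        _ = a (.horiz i (j + 1)) * g (i, j + 1) := mul_assoc ..
  refine ⟨g, fun τ hτ e he ↦ ?_⟩
  obtain ⟨h₁, h₂⟩ : τ.1 < N ∧ τ.2 < N := by simpa [outside] using hτ
  obtain rfl | rfl | rfl | rfl := he
  · exact horiz_step _ h₂.le _ h₁
  · exact horiz_step _ h₂ _ h₁
  all_goals rfl

/-- Sets of faces obtained from the outside of the `N × N` box by successively adding faces that
share an edge with a face already present. An edge function that is flat off such a set becomes flat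
on the whole box after changing it on edges between faces of the set. -/
inductive Collapsible (N : ℕ) : Set (ℕ × ℕ) → Prop
  | outside : Collapsible N (outside N)
  | insert {L : Set (ℕ × ℕ)} {σ τ : ℕ × ℕ} {e : Edge} (hL : Collapsible N L) (hσ : σ ∈ L)
    (heσ : e ∈ faceEdges σ) (heτ : e ∈ faceEdges τ) : Collapsible N (insert τ L)

namespace Collapsible

variable {N : ℕ} {L M : Set (ℕ × ℕ)}

lemma outside_subset (hL : Collapsible N L) : PointRemoval.outside N ⊆ L := by
  induction hL with
  | outside => rfl
  | insert _ _ _ _ ih => exact ih.trans (subset_insert ..)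

lemma union (hL : Collapsible N L) (hM : Collapsible N M) : Collapsible N (L ∪ M) := by
  induction hM with
  | outside => rwa [union_eq_left.2 hL.outside_subset]
  | insert _ hσ heσ heτ ih => exact union_insert ▸ ih.insert (.inr hσ) heσ heτ

theorem exists_isPotentialOff (hL : Collapsible N L) {a : Edge → G} (ha : ∀ τ ∉ L, Flat a τ) :
    ∃ g, IsPotentialOff L a g := by
  classical
  induction hL generalizing a with
  | outside => exact exists_isPotentialOff_outside ha
  | @insert L σ τ e _ hσ heσ heτ ih =>
    by_cases hτ : τ ∈ L
    · rw [insert_eq_of_mem hτ] at ha ⊢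
      exact ih ha
    have hστ : σ ≠ τ := fun h ↦ hτ (h ▸ hσ)
    obtain ⟨x, hx⟩ := exists_flat_update a heτ
    -- `σ` and `τ` are the only faces at `e`, so changing `a e` affects no other face.
    have agree (ρ : ℕ × ℕ) (hρL : ρ ∉ L) (hρτ : ρ ≠ τ) :
        EqOn a (Function.update a e x) (faceEdges ρ) := fun e' he' ↦
      (Function.update_of_ne (fun h ↦ (eq_or_eq_of_mem_faceEdges hστ heσ heτ (h ▸ he')).elim
        (fun h' ↦ hρL (by rwa [h'])) hρτ) ..).symm
    obtain ⟨g, hg⟩ := ih (a := Function.update a e x) fun ρ hρL ↦ by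
      obtain rfl | hρτ := eq_or_ne ρ τ
      · exact hx
      · exact (ha ρ (by simp [hρL, hρτ])).congr (agree ρ hρL hρτ)
    refine ⟨g, fun ρ hρ e' he' ↦ ?_⟩
    rw [mem_insert_iff, not_or] at hρ
    rw [hg ρ hρ.2 e' he', agree ρ hρ.2 hρ.1 he']

end Collapsible

end Potential

section Separation

lemma Flat.bottom_eq_one {G : Type*} [CommGroup G] {a : Edge → G} (ha : ∀ τ, Flat a τ) {N k : ℕ}
    (hkN : k < N) (left : ∀ j, a (.vert 0 j) = 1) (right : ∀ j, a (.vert N j) = 1)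
    (top : ∀ i, a (.horiz i N) = 1) (bottom : ∀ i ≠ k, a (.horiz i 0) = 1) :
    a (.horiz k 0) = 1 := by
  open Finset in
  have row_eq (j : ℕ) : ∏ i ∈ range N, a (.horiz i j) = ∏ i ∈ range N, a (.horiz i (j + 1)) := by
    rw [← div_eq_one, ← prod_div_distrib]
    calc ∏ i ∈ range N, a (.horiz i j) / a (.horiz i (j + 1))
        = ∏ i ∈ range N, a (.vert i j) / a (.vert (i + 1) j) := prod_congr rfl fun i _ ↦ by
          rw [div_eq_div_iff_mul_eq_mul, mul_comm, ha (i, j), mul_comm]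
      _ = 1 := by rw [prod_range_div', left, right, div_one]
  have row_zero (j : ℕ) : ∏ i ∈ range N, a (.horiz i 0) = ∏ i ∈ range N, a (.horiz i j) := by
    induction j with
    | zero => rfl
    | succ j ih => rw [ih, row_eq]
  calc a (.horiz k 0) = ∏ i ∈ range N, a (.horiz i 0) :=
        (prod_eq_single k (fun i _ ↦ bottom i) (by simp [hkN.not_ge])).symm
    _ = 1 := by rw [row_zero N, prod_eq_one fun i _ ↦ top i]

/-- Modulo 2, the edges of `Lᶜ` whose end points are separated by `S` form a cycle in the dual
grid, relative to the bottom side. -/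
theorem mem_iff_mem_of_outside_subset {N k : ℕ} {L S : Set (ℕ × ℕ)} (hL : outside N ⊆ L)
    (hcross : ∀ σ ∈ L, ∀ τ ∉ L, ∀ e ∈ faceEdges σ, e ∈ faceEdges τ → (e.src ∈ S ↔ e.tgt ∈ S))
    (hleft : ∀ j, (0, j) ∉ L → ((0, j) ∈ S ↔ (0, j + 1) ∈ S))
    (hbottom : ∀ i ≠ k, (i, 0) ∉ L → ((i, 0) ∈ S ↔ (i + 1, 0) ∈ S)) (hk : (k, 0) ∉ L) :
    (k, 0) ∈ S ↔ (k + 1, 0) ∈ S := by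
  classical
  let χ (v : ℕ × ℕ) : ℤˣ := if v ∈ S then 1 else -1
  have χ_div {v w : ℕ × ℕ} : χ w / χ v = 1 ↔ (v ∈ S ↔ w ∈ S) := by
    by_cases hv : v ∈ S <;> by_cases hw : w ∈ S <;> simp [χ, hv, hw]
  let ε (e : Edge) : ℤˣ := if ∃ τ ∉ L, e ∈ faceEdges τ then χ e.tgt / χ e.src else 1
  have ε_of_notMem {τ e} (hτ : τ ∉ L) (he : e ∈ faceEdges τ) : ε e = χ e.tgt / χ e.src :=
    if_pos ⟨τ, hτ, he⟩
  have ε_eq_one {e : Edge} (h : ∀ τ ∉ L, e ∈ faceEdges τ → (e.src ∈ S ↔ e.tgt ∈ S)) : ε e = 1 := by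
    by_cases he : ∃ τ ∉ L, e ∈ faceEdges τ
    · obtain ⟨τ, hτ, heτ⟩ := he
      rw [ε_of_notMem hτ heτ, χ_div]
      exact h τ hτ heτ
    · exact if_neg he
  have ε_of_mem {σ e} (hσ : σ ∈ L) (he : e ∈ faceEdges σ) : ε e = 1 :=
    ε_eq_one fun τ hτ ↦ hcross σ hσ τ hτ e he
  have flat (τ : ℕ × ℕ) : Flat ε τ := by
    by_cases h : τ ∈ L
    · rw [Flat, ε_of_mem h, ε_of_mem h, ε_of_mem h, ε_of_mem h] <;> simp
    · rw [Flat, ε_of_notMem h, ε_of_notMem h, ε_of_notMem h, ε_of_notMem h] <;>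
        simp [Edge.src, Edge.tgt]
  suffices ε (.horiz k 0) = 1 by rwa [ε_of_notMem hk (by simp), χ_div] at this
  refine Flat.bottom_eq_one (N := N) flat (not_le.1 fun h ↦ hk (hL (.inl h))) (fun j ↦ ?_)
    (fun j ↦ ε_of_mem (σ := (N, j)) (hL (.inl le_rfl)) (by simp))
    (fun i ↦ ε_of_mem (σ := (i, N)) (hL (.inr le_rfl)) (by simp)) fun i hi ↦ ?_
  · refine ε_eq_one fun τ hτ he ↦ hleft j ?_
    obtain ⟨h₁ | h₁, h₂⟩ := vert_mem_faceEdges.1 he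
    · rwa [h₁, h₂]
    · omega
  · refine ε_eq_one fun τ hτ he ↦ hbottom i hi ?_
    obtain ⟨h₁, h₂ | h₂⟩ := horiz_mem_faceEdges.1 he
    · rwa [h₁, h₂]
    · omega

end Separation

open unitInterval

section Connectedness

variable {Z : Type*} [TopologicalSpace Z]

lemma exists_mem_nhds_isCompact_isConnected [R1Space Z] [LocallyCompactSpace Z]
    [LocallyConnectedSpace Z] {U : Set Z} {x : Z} (hU : U ∈ 𝓝 x) :
    ∃ V ∈ 𝓝 x, IsCompact V ∧ IsConnected V ∧ V ⊆ U := by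
  obtain ⟨K, ⟨hK, hKc, hKclosed⟩, hKU⟩ := (isCompact_isClosed_basis_nhds x).mem_iff.1 hU
  have hx : x ∈ interior K := mem_interior_iff_mem_nhds.2 hK
  have hsub : closure (connectedComponentIn (interior K) x) ⊆ K :=
    closure_minimal ((connectedComponentIn_subset ..).trans interior_subset) hKclosed
  refine ⟨_, Filter.mem_of_superset ?_ subset_closure, hKc.of_isClosed_subset isClosed_closure hsub,
    (isConnected_connectedComponentIn_iff.2 hx).closure, hsub.trans hKU⟩
  exact isOpen_interior.connectedComponentIn.mem_nhds (mem_connectedComponentIn hx)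

lemma exists_isCompact_isConnected_between [R1Space Z] [LocallyCompactSpace Z]
    [LocallyPathConnectedSpace Z] {K U : Set Z} (hK : IsCompact K) (hU : IsOpen U)
    (hUc : IsConnected U) (hKU : K ⊆ U) : ∃ C, IsCompact C ∧ IsConnected C ∧ K ⊆ C ∧ C ⊆ U := by
  obtain ⟨x₀, hx₀, joined⟩ := hU.isConnected_iff_isPathConnected.1 hUc
  suffices ∃ C, IsCompact C ∧ IsConnected C ∧ K ⊆ C ∧ C ⊆ U ∧ x₀ ∈ C from
    let ⟨C, hC, hCc, hKC, hCU, _⟩ := this; ⟨C, hC, hCc, hKC, hCU⟩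
  refine hK.induction_on
    (p := fun S ↦ ∃ C, IsCompact C ∧ IsConnected C ∧ S ⊆ C ∧ C ⊆ U ∧ x₀ ∈ C) ?_ ?_ ?_ ?_
  · exact ⟨{x₀}, isCompact_singleton, isConnected_singleton, empty_subset _, by simpa, rfl⟩
  · rintro S T hST ⟨C, hC, hCc, hTC, hCU⟩
    exact ⟨C, hC, hCc, hST.trans hTC, hCU⟩
  · rintro S T ⟨C, hC, hCc, hSC, hCU, hxC⟩ ⟨D, hD, hDc, hTD, hDU, hxD⟩
    exact ⟨C ∪ D, hC.union hD, hCc.union ⟨x₀, hxC, hxD⟩ hDc, union_subset_union hSC hTD,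
      union_subset hCU hDU, .inl hxC⟩
  · intro x hx
    obtain ⟨γ, hγ⟩ := joined (hKU hx)
    obtain ⟨V, hV, hVc, hVconn, hVU⟩ := exists_mem_nhds_isCompact_isConnected
      (hU.mem_nhds (hKU hx))
    exact ⟨V, mem_nhdsWithin_of_mem_nhds hV, range γ ∪ V, (isCompact_range γ.continuous).union hVc,
      (isConnected_range γ.continuous).union ⟨x, ⟨1, γ.target⟩, mem_of_mem_nhds hV⟩ hVconn,
      subset_union_right, union_subset (range_subset_iff.2 hγ) hVU, .inl ⟨0, γ.source⟩⟩

open Classical in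
lemma continuous_piecewise_connectedComponentIn [LocallyConnectedSpace Z] {X : Type*}
    [TopologicalSpace X] {F : Z → X} (hF : Continuous F) {q : X} (hq : IsClosed {q}) (z₀ : Z) :
    Continuous ((connectedComponentIn (F ⁻¹' {q})ᶜ z₀).piecewise F fun _ ↦ q) := by
  have hopen : IsOpen (F ⁻¹' {q})ᶜ := (hq.preimage hF).isOpen_compl
  refine hF.piecewise (fun z hz ↦ ?_) continuous_const
  by_contra hzq
  obtain ⟨y, hyz, hy⟩ := mem_closure_iff.1 hz.1 _ hopen.connectedComponentIn
    (mem_connectedComponentIn hzq)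
  rw [hopen.connectedComponentIn.frontier_eq, connectedComponentIn_eq hy,
    ← connectedComponentIn_eq hyz] at hz
  exact hz.2 (mem_connectedComponentIn hzq)

end Connectedness

instance : LocallyPathConnectedSpace unitInterval := (convex_Icc 0 1).locallyPathConnectedSpace

section Faces

/-- The points of the unit interval in the `i`-th of the consecutive intervals of length `1 / N`.
For `i = N` this is just `{1}`, for `i > N` it is empty. -/
def strip (N i : ℕ) : Set I := {x | (x : ℝ) * N ∈ Icc (i : ℝ) (i + 1)}

/-- The face of the `N × N` grid on the unit square with lower left corner `(τ.1 / N, τ.2 / N)`. For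
`τ ∈ outside N` it degenerates to a subset of the top or the right side of the square. -/
def face (N : ℕ) (τ : ℕ × ℕ) : Set (I × I) := strip N τ.1 ×ˢ strip N τ.2

variable {N : ℕ}

lemma isClosed_strip (N i : ℕ) : IsClosed (strip N i) :=
  isClosed_Icc.preimage (by fun_prop : Continuous fun x : I ↦ (x : ℝ) * N)

lemma isClosed_face (N : ℕ) (τ : ℕ × ℕ) : IsClosed (face N τ) :=
  (isClosed_strip ..).prod (isClosed_strip ..)

lemma exists_mem_strip (N : ℕ) (x : I) : ∃ i, x ∈ strip N i :=
  ⟨⌊(x : ℝ) * N⌋₊, Nat.floor_le (mul_nonneg x.2.1 N.cast_nonneg), (Nat.lt_floor_add_one _).le⟩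

lemma exists_mem_face (N : ℕ) (z : I × I) : ∃ τ, z ∈ face N τ :=
  let ⟨i, hi⟩ := exists_mem_strip N z.1
  let ⟨j, hj⟩ := exists_mem_strip N z.2
  ⟨(i, j), hi, hj⟩

lemma le_of_mem_strip {i : ℕ} {x : I} (hx : x ∈ strip N i) : i ≤ N :=
  Nat.cast_le.1 (hx.1.trans (mul_le_of_le_one_left N.cast_nonneg x.2.2))

lemma mem_Iic_of_mem_face {τ : ℕ × ℕ} {z : I × I} (hz : z ∈ face N τ) : τ ∈ Iic (N, N) :=
  ⟨le_of_mem_strip hz.1, le_of_mem_strip hz.2⟩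

lemma le_add_one_of_mem_strip {i j : ℕ} {x : I} (hi : x ∈ strip N i) (hj : x ∈ strip N j) :
    i ≤ j + 1 := by
  exact_mod_cast hi.1.trans hj.2

lemma eq_one_of_mem_strip_of_le {i : ℕ} (hN : N ≠ 0) (hi : N ≤ i) {x : I} (hx : x ∈ strip N i) :
    x = 1 := by
  have hN' : (0 : ℝ) < N := by positivity
  have h : (N : ℝ) ≤ x * N := (Nat.cast_le.2 hi).trans hx.1
  exact le_antisymm x.2.2 (Subtype.coe_le_coe.1 ((le_mul_iff_one_le_left hN').1 h))

lemma dist_le_of_mem_strip {i : ℕ} (hN : N ≠ 0) {x y : I} (hx : x ∈ strip N i)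
    (hy : y ∈ strip N i) : dist x y ≤ 1 / N := by
  have hN' : (0 : ℝ) < N := by positivity
  have h : |(x : ℝ) * N - y * N| ≤ 1 := by
    simpa [Real.dist_eq] using Real.dist_le_of_mem_Icc hx hy
  rwa [← sub_mul, abs_mul, abs_of_pos hN', ← le_div_iff₀ hN'] at h

lemma dist_le_of_mem_face (hN : N ≠ 0) {τ : ℕ × ℕ} {z w : I × I} (hz : z ∈ face N τ)
    (hw : w ∈ face N τ) : dist z w ≤ 1 / N :=
  max_le (dist_le_of_mem_strip hN hz.1 hw.1) (dist_le_of_mem_strip hN hz.2 hw.2)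

lemma isClosed_biUnion_face (N : ℕ) (s : Set (ℕ × ℕ)) : IsClosed (⋃ τ ∈ s, face N τ) := by
  have h : ⋃ τ ∈ s, face N τ = ⋃ τ ∈ s ∩ Iic (N, N), face N τ := by
    ext z
    simp only [mem_iUnion, mem_inter_iff, exists_prop]
    exact ⟨fun ⟨τ, hτ, hz⟩ ↦ ⟨τ, ⟨hτ, mem_Iic_of_mem_face hz⟩, hz⟩, fun ⟨τ, hτ, hz⟩ ↦ ⟨τ, hτ.1, hz⟩⟩
  rw [h]
  exact ((finite_Iic _).inter_of_right s).isClosed_biUnion fun τ _ ↦ isClosed_face N τ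

lemma exists_common_edge_of_fst {i i' j : ℕ} (h : i ≤ i' + 1) (h' : i' ≤ i + 1) :
    ∃ e, e ∈ faceEdges (i, j) ∧ e ∈ faceEdges (i', j) :=
  ⟨.vert (max i i') j, by simp; omega, by simp; omega⟩

lemma exists_common_edge_of_snd {i j j' : ℕ} (h : j ≤ j' + 1) (h' : j' ≤ j + 1) :
    ∃ e, e ∈ faceEdges (i, j) ∧ e ∈ faceEdges (i, j') :=
  ⟨.horiz i (max j j'), by simp; omega, by simp; omega⟩

lemma mem_of_inter_face_nonempty {C : Set (I × I)} (hC : IsPreconnected C) {R : Set (ℕ × ℕ)}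
    (hstart : ∃ ρ ∈ R, (C ∩ face N ρ).Nonempty)
    (hstep : ∀ ρ ∈ R, ∀ τ, (C ∩ face N τ).Nonempty → ∀ e ∈ faceEdges ρ, e ∈ faceEdges τ → τ ∈ R)
    {τ : ℕ × ℕ} (hτ : (C ∩ face N τ).Nonempty) : τ ∈ R := by
  by_contra hτR
  have cover : C ⊆ (⋃ ρ ∈ R, face N ρ) ∪ ⋃ ρ ∈ Rᶜ, face N ρ := fun z _ ↦ by
    obtain ⟨ρ, hρ⟩ := exists_mem_face N z
    by_cases h : ρ ∈ R
    · exact .inl (mem_biUnion h hρ)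
    · exact .inr (mem_biUnion h hρ)
  obtain ⟨ρ, hρR, hρ⟩ := hstart
  obtain ⟨z, hzC, hz_mem, hz_compl⟩ := isPreconnected_closed_iff.1 hC _ _
    (isClosed_biUnion_face N R) (isClosed_biUnion_face N Rᶜ) cover
    (hρ.mono (inter_subset_inter_right _ (subset_biUnion_of_mem hρR)))
    (hτ.mono (inter_subset_inter_right _ (subset_biUnion_of_mem hτR)))
  simp only [mem_iUnion, exists_prop] at hz_mem hz_compl
  obtain ⟨⟨i, j⟩, hR, hi, hj⟩ := hz_mem
  obtain ⟨⟨i', j'⟩, hnR, hi', hj'⟩ := hz_compl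
  -- The two faces may meet only in the corner `z`; `(i', j)` is then adjacent to both.
  obtain ⟨e, he, he'⟩ := exists_common_edge_of_fst (j := j)
    (le_add_one_of_mem_strip hi hi') (le_add_one_of_mem_strip hi' hi)
  obtain ⟨d, hd, hd'⟩ := exists_common_edge_of_snd (i := i')
    (le_add_one_of_mem_strip hj hj') (le_add_one_of_mem_strip hj' hj)
  have middle : (i', j) ∈ R := hstep _ hR _ ⟨z, hzC, hi', hj⟩ e he he'
  exact hnR (hstep _ middle _ ⟨z, hzC, hi', hj'⟩ d hd hd')

theorem exists_collapsible_of_isPreconnected {C U : Set (I × I)} (hC : IsPreconnected C)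
    (hCout : ∃ τ ∈ outside N, (C ∩ face N τ).Nonempty) (hU : ∀ τ ∈ outside N, face N τ ⊆ U)
    (hCU : ∀ τ, (C ∩ face N τ).Nonempty → face N τ ⊆ U) :
    ∃ L, Collapsible N L ∧ (∀ τ ∈ L, face N τ ⊆ U) ∧ ∀ τ, (C ∩ face N τ).Nonempty → τ ∈ L := by
  let good : Set (Set (ℕ × ℕ)) := {L | Collapsible N L ∧ ∀ τ ∈ L, face N τ ⊆ U}
  have outside_good : outside N ∈ good := ⟨.outside, hU⟩
  have covers : {τ | (C ∩ face N τ).Nonempty} ⊆ ⋃₀ good := by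
    obtain ⟨ρ, hρ, hρC⟩ := hCout
    refine fun τ ↦ mem_of_inter_face_nonempty hC (R := ⋃₀ good)
      ⟨ρ, ⟨_, outside_good, hρ⟩, hρC⟩ ?_
    rintro ρ ⟨L, ⟨hL, hLU⟩, hρL⟩ τ hτ e heρ heτ
    exact ⟨insert τ L, ⟨hL.insert hρL heρ heτ, forall_mem_insert.2 ⟨hCU τ hτ, hLU⟩⟩,
      mem_insert ..⟩
  have finite : {τ | (C ∩ face N τ).Nonempty}.Finite :=
    (finite_Iic (N, N)).subset fun τ ⟨z, _, hz⟩ ↦ mem_Iic_of_mem_face hz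
  have directed : DirectedOn (· ⊆ ·) good := fun L hL M hM ↦
    ⟨L ∪ M, ⟨hL.1.union hM.1, fun τ hτ ↦ hτ.elim (hL.2 τ) (hM.2 τ)⟩,
      subset_union_left, subset_union_right⟩
  obtain ⟨L, ⟨hL, hLU⟩, hsub⟩ := directed.exists_mem_subset_of_finite_of_subset_sUnion
    ⟨_, outside_good⟩ finite covers
  exact ⟨L, hL, hLU, hsub⟩

end Faces

section Holonomy

universe u v

open CategoryTheory

theorem exists_faithful_functor_singleObj (C : Type u) [Groupoid.{v} C] :
    ∃ (G : Type max u v) (_ : Group G) (Φ : C ⥤ SingleObj G), Φ.Faithful := by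
  classical
  let hol (x : C) {y z : C} (f : y ⟶ z) : End x :=
    if h : Nonempty (x ⟶ y) then h.some ≫ f ≫ inv (h.map (· ≫ f)).some else 1
  have hol_id (x y : C) : hol x (𝟙 y) = 1 := by
    unfold hol
    split_ifs with h
    · simp
    · rfl
  have hol_comp (x : C) {y z w : C} (f : y ⟶ z) (g : z ⟶ w) :
      hol x (f ≫ g) = hol x g * hol x f := by
    unfold hol
    by_cases h : Nonempty (x ⟶ y)
    · have h' : Nonempty (x ⟶ z) := h.map (· ≫ f)
      simp [h, h', End.mul_def]
    · have h' : ¬ Nonempty (x ⟶ z) := fun h' ↦ h (h'.map (· ≫ inv f))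
      simp [h, h']
  refine ⟨∀ x : C, End x, inferInstance,
    { obj _ := SingleObj.star _
      map f := fun x ↦ hol x f
      map_id y := funext fun x ↦ hol_id x y
      map_comp f g := funext fun x ↦ hol_comp x f g }, ⟨fun {y z f f'} hff' ↦ ?_⟩⟩
  have h : Nonempty (y ⟶ y) := ⟨𝟙 y⟩
  have hol_eq : h.some ≫ f ≫ inv (h.map (· ≫ f)).some = h.some ≫ f' ≫ inv (h.map (· ≫ f)).some := by
    simpa only [hol, dif_pos h] using congrFun hff' y
  exact (cancel_mono _).1 ((cancel_epi _).1 hol_eq)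

/-- An assignment of elements of a group to the paths of `Y`, reversing concatenation into
multiplication, that separates exactly the homotopy classes of paths with given endpoints. -/
structure Holonomy (Y G : Type*) [TopologicalSpace Y] [Group G] where
  /-- The value on a path. -/
  hol {x y : Y} (γ : Path x y) : G
  hol_trans {x y z : Y} (γ : Path x y) (δ : Path y z) : hol (γ.trans δ) = hol δ * hol γ
  hol_eq_iff {x y : Y} {γ δ : Path x y} : hol γ = hol δ ↔ γ.Homotopic δ

namespace Holonomy

theorem exists_holonomy (Y : Type u) [TopologicalSpace Y] :
    ∃ (G : Type u) (_ : Group G), Nonempty (Holonomy Y G) := by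
  obtain ⟨G, _, Φ, hΦ⟩ := exists_faithful_functor_singleObj (FundamentalGroupoid Y)
  exact ⟨G, _, ⟨{
    hol γ := Φ.map (FundamentalGroupoid.fromPath (.mk γ))
    hol_trans γ δ := Φ.map_comp (FundamentalGroupoid.fromPath (.mk γ))
      (FundamentalGroupoid.fromPath (.mk δ))
    hol_eq_iff := Φ.map_injective.eq_iff.trans Path.Homotopic.Quotient.eq }⟩⟩

variable {Y G : Type*} [TopologicalSpace Y] [Group G] (Φ : Holonomy Y G)

@[simp]
lemma hol_refl (x : Y) : Φ.hol (Path.refl x) = 1 := by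
  have h := Φ.hol_trans (.refl x) (.refl x)
  rwa [Path.refl_trans_refl, left_eq_mul] at h

@[simp]
lemma hol_symm {x y : Y} (γ : Path x y) : Φ.hol γ.symm = (Φ.hol γ)⁻¹ := by
  rw [eq_inv_iff_mul_eq_one, ← Φ.hol_trans, ← Φ.hol_refl x, Φ.hol_eq_iff]
  exact Path.Homotopic.trans_symm γ

lemma hol_map_prod_square {X₁ X₂ : Type*} [TopologicalSpace X₁] [TopologicalSpace X₂]
    (h : C(X₁ × X₂, Y)) {x x' : X₁} {y y' : X₂} (γ : Path x x')
    (δ : Path y y') :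
    Φ.hol (((Path.refl x').prod δ).map h.continuous) *
        Φ.hol ((γ.prod (.refl y)).map h.continuous) =
      Φ.hol ((γ.prod (.refl y')).map h.continuous) *
        Φ.hol (((Path.refl x).prod δ).map h.continuous) := by
  rw [← Φ.hol_trans, ← Φ.hol_trans, Φ.hol_eq_iff, ← Path.map_trans, ← Path.map_trans,
    Path.trans_prod_eq_prod_trans, Path.trans_prod_eq_prod_trans]
  have hγ : (γ.trans (.refl x')).Homotopy ((Path.refl x).trans γ) :=
    (Path.Homotopy.transRefl γ).trans (Path.Homotopy.reflTrans γ).symm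
  have hδ : ((Path.refl y).trans δ).Homotopy (δ.trans (.refl y')) :=
    (Path.Homotopy.reflTrans δ).trans (Path.Homotopy.transRefl δ).symm
  exact Path.Homotopic.map ⟨Path.Homotopic.prodHomotopy hγ hδ⟩ h

end Holonomy

end Holonomy

section Grid

variable {N : ℕ}

/-- The grid point `i / N`, truncated to the unit interval. -/
noncomputable def node (N i : ℕ) : I := projIcc 0 1 zero_le_one ((i : ℝ) / N)

/-- The point of the unit square at the grid vertex `v`. -/
noncomputable def vertex (N : ℕ) (v : ℕ × ℕ) : I × I := (node N v.1, node N v.2)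

/-- The affine path between consecutive grid points. -/
noncomputable def step (N i : ℕ) : Path (node N i) (node N (i + 1)) where
  toFun := Icc.convexComb (node N i) (node N (i + 1))
  source' := by simp
  target' := by simp

/-- The path in the unit square along an edge of the grid. -/
noncomputable def Edge.path (N : ℕ) : (e : Edge) → Path (vertex N e.src) (vertex N e.tgt)
  | horiz i j => (step N i).prod (Path.refl (node N j))
  | vert i j => (Path.refl (node N i)).prod (step N j)

lemma node_zero (N : ℕ) : node N 0 = 0 := by simp [node]

lemma Edge.horiz_zero_path_apply (i : ℕ) (t : I) : (horiz i 0).path N t = (step N i t, 0) :=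
  Prod.ext rfl (node_zero N)

lemma Edge.vert_zero_path_apply (j : ℕ) (t : I) : (vert 0 j).path N t = (0, step N j t) :=
  Prod.ext (node_zero N) rfl

lemma coe_node_mul {i : ℕ} (hi : i ≤ N) : (node N i : ℝ) * N = i := by
  obtain rfl | hN := eq_or_ne N 0
  · simpa [eq_comm] using hi
  have hi' : (i : ℝ) ≤ N := Nat.cast_le.2 hi
  rw [node, projIcc_of_mem _ ⟨by positivity, div_le_one_of_le₀ hi' N.cast_nonneg⟩]
  field_simp

lemma coe_step_mul {i : ℕ} (hi : i < N) (s : I) : (step N i s : ℝ) * N = i + s :=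
  calc (step N i s : ℝ) * N = (1 - s) * (node N i * N) + s * (node N (i + 1) * N) := by
        rw [step, Path.coe_mk_mk, Icc.coe_convexComb]; ring
    _ = i + s := by rw [coe_node_mul hi.le, coe_node_mul hi]; push_cast; ring

lemma step_mem_strip {i : ℕ} (hi : i < N) (s : I) : step N i s ∈ strip N i := by
  rw [strip, mem_ofPred_eq, coe_step_mul hi]
  exact ⟨by linarith [s.2.1], by linarith [s.2.2]⟩

lemma node_mem_strip {i j : ℕ} (hj : j ≤ N) (hij : j = i ∨ j = i + 1) : node N j ∈ strip N i := by
  rw [strip, mem_ofPred_eq, coe_node_mul hj]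
  obtain rfl | rfl := hij <;> simp

lemma Edge.path_mem_face {e : Edge} {τ ρ : ℕ × ℕ} (hτ : τ ∉ outside N) (heτ : e ∈ faceEdges τ)
    (heρ : e ∈ faceEdges ρ) (t : I) : e.path N t ∈ face N ρ := by
  obtain ⟨h₁, h₂⟩ : τ.1 < N ∧ τ.2 < N := by simpa [outside] using hτ
  cases e with
  | horiz i j =>
    rw [horiz_mem_faceEdges] at heτ heρ
    exact ⟨heρ.1 ▸ step_mem_strip (by omega) t, node_mem_strip (by omega) heρ.2⟩
  | vert i j =>
    rw [vert_mem_faceEdges] at heτ heρ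
    exact ⟨node_mem_strip (by omega) heρ.1, heρ.2 ▸ step_mem_strip (by omega) t⟩

end Grid

section Avoidance

variable {Y : Type*} [TopologicalSpace Y] {Q : Set Y} {x y z : Y}

lemma forall_trans_notMem {γ : Path x y} {δ : Path y z} (hγ : ∀ t, γ t ∉ Q) (hδ : ∀ t, δ t ∉ Q)
    (t : I) : γ.trans δ t ∉ Q := by
  intro ht
  obtain ⟨s, hs⟩ | ⟨s, hs⟩ := Path.trans_range γ δ ▸ mem_range_self (f := γ.trans δ) t
  · exact hγ s (hs ▸ ht)
  · exact hδ s (hs ▸ ht)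

lemma exists_homotopic_forall_notMem_of_subpath (f : Path x y) {a b : I} {γ : Path (f a) (f b)}
    (hγ : γ.Homotopic (f.subpath a b)) (hγQ : ∀ t, γ t ∉ Q) (hfQ : ∀ s, f s ∈ Q → s ∈ Ioo a b) :
    ∃ f' : Path x y, f.Homotopic f' ∧ ∀ s, f' s ∉ Q := by
  have hbefore (s : I) : f.subpath 0 a s ∉ Q := fun hs ↦
    (hfQ _ hs).1.not_ge (Icc.convexComb_le (unitInterval.nonneg a) s)
  have hafter (s : I) : f.subpath b 1 s ∉ Q := fun hs ↦
    (hfQ _ hs).2.not_ge (Icc.le_convexComb (unitInterval.le_one b) s)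
  have homotopic : f.Homotopic
      ((((f.subpath 0 a).trans γ).trans (f.subpath b 1)).cast f.source.symm f.target.symm) := by
    have h : (((f.subpath 0 a).trans γ).trans (f.subpath b 1)).Homotopic (f.subpath 0 1) :=
      .trans (.hcomp (.trans (.hcomp (.refl _) hγ) ⟨.subpathTransSubpath f 0 a b⟩) (.refl _))
        ⟨.subpathTransSubpath f 0 b 1⟩
    rw [Path.subpath_zero_one] at h
    exact (h.pathCast f.source.symm f.target.symm).symm
  exact ⟨_, homotopic, forall_trans_notMem (forall_trans_notMem hbefore hγQ) hafter⟩

variable {G : Type*} [Group G] {N : ℕ} {h : I × I → Y}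

namespace Holonomy

open Classical in
/-- The holonomy of the image of an edge of the `N × N` grid under `h`, with value `1` if `h` is not
continuous along the edge. -/
noncomputable def edge (Φ : Holonomy Y G) (N : ℕ) (h : I × I → Y) (e : Edge) : G :=
  if H : ContinuousOn h (range (e.path N)) then Φ.hol ((e.path N).map' H) else 1

lemma edge_eq (Φ : Holonomy Y G) {e : Edge} (H : ContinuousOn h (range (e.path N))) :
    Φ.edge N h e = Φ.hol ((e.path N).map' H) :=
  dif_pos H

lemma flat_edge (Φ : Holonomy Y G) {τ : ℕ × ℕ} (hτ : τ ∉ outside N)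
    (hh : ContinuousOn h (face N τ)) : Flat (Φ.edge N h) τ := by
  have hcont {e : Edge} (he : e ∈ faceEdges τ) : ContinuousOn h (range (e.path N)) :=
    hh.mono (range_subset_iff.2 (Edge.path_mem_face hτ he he))
  obtain ⟨i, j⟩ := τ
  obtain ⟨hi, hj⟩ : i < N ∧ j < N := by simpa [outside] using hτ
  let stepIn (k : ℕ) (hk : k < N) : Path (⟨node N k, node_mem_strip hk.le (.inl rfl)⟩ : strip N k)
      ⟨node N (k + 1), node_mem_strip hk (.inr rfl)⟩ :=
    { toFun s := ⟨step N k s, step_mem_strip hk s⟩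
      source' := Subtype.ext (step N k).source
      target' := Subtype.ext (step N k).target }
  let h' : C(strip N i × strip N j, Y) :=
    ⟨fun z ↦ h (z.1, z.2), hh.comp_continuous (by fun_prop) fun z ↦ ⟨z.1.2, z.2.2⟩⟩
  rw [Flat, Φ.edge_eq (hcont (by simp)), Φ.edge_eq (hcont (by simp)), Φ.edge_eq (hcont (by simp)),
    Φ.edge_eq (hcont (by simp))]
  exact Φ.hol_map_prod_square h' (stepIn i hi) (stepIn j hj)

/-- `y` is the end point of a path that starts at `x`, avoids `Q` and has holonomy `c`. -/
def Reaches (Φ : Holonomy Y G) (Q : Set Y) (x y : Y) (c : G) : Prop :=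
  ∃ γ : Path x y, Φ.hol γ = c ∧ ∀ t, γ t ∉ Q

variable {Φ : Holonomy Y G} {c : G}

lemma Reaches.refl (hx : x ∉ Q) : Φ.Reaches Q x x 1 := ⟨.refl x, Φ.hol_refl x, fun _ ↦ hx⟩

lemma Reaches.trans (h : Φ.Reaches Q x y c) {δ : Path y z} (hδ : ∀ t, δ t ∉ Q) :
    Φ.Reaches Q x z (Φ.hol δ * c) := by
  obtain ⟨γ, rfl, hγ⟩ := h
  exact ⟨γ.trans δ, Φ.hol_trans γ δ, forall_trans_notMem hγ hδ⟩

lemma reaches_hol_mul_iff {δ : Path y z} (hδ : ∀ t, δ t ∉ Q) :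
    Φ.Reaches Q x z (Φ.hol δ * c) ↔ Φ.Reaches Q x y c := by
  refine ⟨fun h ↦ ?_, fun h ↦ h.trans hδ⟩
  simpa only [Φ.hol_symm, inv_mul_cancel_left] using h.trans (δ := δ.symm) fun t ↦ hδ (σ t)

end Holonomy

theorem exists_path_forall_notMem {k : ℕ} {L : Set (ℕ × ℕ)} (hL : Collapsible N L)
    (hcont : ∀ τ ∉ L, ContinuousOn h (face N τ)) (hLQ : ∀ τ ∈ L, ∀ z ∈ face N τ, h z ∉ Q)
    (hleft : ∀ t, h (0, t) ∉ Q)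
    (hbottom : ∀ s, h (s, 0) ∈ Q → (s : ℝ) * N ∈ Ioo (k : ℝ) (k + 1)) (hk : (k, 0) ∉ L)
    (H : ContinuousOn h (range ((Edge.horiz k 0).path N))) :
    ∃ γ : Path (h (vertex N (k, 0))) (h (vertex N (k + 1, 0))),
      γ.Homotopic (((Edge.horiz k 0).path N).map' H) ∧ ∀ t, γ t ∉ Q := by
  obtain ⟨G, _, ⟨Φ⟩⟩ := Holonomy.exists_holonomy Y
  have notMem_outside {τ} (hτ : τ ∉ L) : τ ∉ outside N := fun h ↦ hτ (hL.outside_subset h)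
  have lt_of_notMem {i} (hi : (i, 0) ∉ L) : i < N := not_le.1 fun h ↦ notMem_outside hi (.inl h)
  obtain ⟨g, hg⟩ := hL.exists_isPotentialOff (a := Φ.edge N h) fun τ hτ ↦
    Φ.flat_edge (notMem_outside hτ) (hcont τ hτ)
  let S : Set (ℕ × ℕ) :=
    {v | Φ.Reaches Q (h (vertex N (k, 0))) (h (vertex N v)) (g v * (g (k, 0))⁻¹)}
  have mem_S_iff {τ e} (hτ : τ ∉ L) (he : e ∈ faceEdges τ) (heQ : ∀ t, h (e.path N t) ∉ Q) :
      e.src ∈ S ↔ e.tgt ∈ S := by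
    have He : ContinuousOn h (range (e.path N)) := (hcont τ hτ).mono
      (range_subset_iff.2 (Edge.path_mem_face (notMem_outside hτ) he he))
    rw [mem_ofPred_eq, mem_ofPred_eq, hg τ hτ e he, Φ.edge_eq He, mul_assoc]
    exact (Holonomy.reaches_hol_mul_iff heQ).symm
  have start_mem : (k, 0) ∈ S := by
    rw [mem_ofPred_eq, mul_inv_cancel]
    refine .refl fun hkQ ↦ (hbottom (node N k) (by rwa [vertex, node_zero] at hkQ)).1.ne' ?_
    exact coe_node_mul (lt_of_notMem hk).le
  have end_mem : (k + 1, 0) ∈ S := by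
    refine (mem_iff_mem_of_outside_subset hL.outside_subset (fun ρ hρ τ hτ e heρ heτ ↦ ?_)
      (fun j hj ↦ ?_) (fun i hik hi ↦ ?_) hk).1 start_mem
    · exact mem_S_iff hτ heτ fun t ↦
        hLQ ρ hρ _ (Edge.path_mem_face (notMem_outside hτ) heτ heρ t)
    · refine mem_S_iff (e := .vert 0 j) hj (by simp) fun t ht ↦ hleft (step N j t) ?_
      rwa [← Edge.vert_zero_path_apply]
    · refine mem_S_iff (e := .horiz i 0) hi (by simp) fun t ht ↦ hik ?_
      obtain ⟨h₁, h₂⟩ := hbottom (step N i t) (by rwa [← Edge.horiz_zero_path_apply])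
      rw [coe_step_mul (lt_of_notMem hi)] at h₁ h₂
      have h₃ : (k : ℝ) < i + 1 := by linarith [t.2.2]
      have h₄ : (i : ℝ) < k + 1 := by linarith [t.2.1]
      norm_cast at h₃ h₄
      omega
  obtain ⟨γ, hγ, hγQ⟩ := end_mem
  refine ⟨γ, Φ.hol_eq_iff.1 ?_, hγQ⟩
  have hgk : g (k + 1, 0) = Φ.edge N h (.horiz k 0) * g (k, 0) :=
    hg (k, 0) hk (.horiz k 0) (by simp)
  rw [hγ, hgk, mul_inv_cancel_right]
  exact Φ.edge_eq H

theorem exists_homotopic_forall_notMem_of_collapsible {f : Path x y} (hf : ∀ s, h (s, 0) = f s)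
    {k : ℕ} {L : Set (ℕ × ℕ)} (hL : Collapsible N L) (hcont : ∀ τ ∉ L, ContinuousOn h (face N τ))
    (hLQ : ∀ τ ∈ L, ∀ z ∈ face N τ, h z ∉ Q) (hleft : ∀ t, h (0, t) ∉ Q)
    (hfQ : ∀ s, f s ∈ Q → (s : ℝ) * N ∈ Ioo (k : ℝ) (k + 1)) (hk : (k, 0) ∉ L) :
    ∃ f' : Path x y, f.Homotopic f' ∧ ∀ s, f' s ∉ Q := by
  have hkN : k < N := not_le.1 fun h ↦ hk (hL.outside_subset (.inl h))
  have hcontk : ContinuousOn h (range ((Edge.horiz k 0).path N)) := (hcont _ hk).mono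
    (range_subset_iff.2 (Edge.path_mem_face (fun h ↦ hk (hL.outside_subset h)) (by simp) (by simp)))
  obtain ⟨γ, hγ, hγQ⟩ := exists_path_forall_notMem hL hcont hLQ hleft
    (fun s hs ↦ hfQ s (hf s ▸ hs)) hk hcontk
  have h_vertex (i : ℕ) : h (vertex N (i, 0)) = f (node N i) := by rw [vertex, node_zero, hf]
  refine exists_homotopic_forall_notMem_of_subpath f
    (γ := γ.cast (h_vertex k).symm (h_vertex (k + 1)).symm) ?_ hγQ fun s hs ↦ ?_
  · convert hγ.pathCast (h_vertex k).symm (h_vertex (k + 1)).symm using 1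
    ext t
    exact ((congrArg h (Edge.horiz_zero_path_apply k t)).trans (hf _)).symm
  · obtain ⟨h₁, h₂⟩ := hfQ s hs
    have hN : (0 : ℝ) ≤ N := N.cast_nonneg
    rw [← coe_node_mul hkN.le] at h₁
    rw [← Nat.cast_add_one, ← coe_node_mul hkN] at h₂
    exact ⟨Subtype.coe_lt_coe.1 (lt_of_mul_lt_mul_right h₁ hN),
      Subtype.coe_lt_coe.1 (lt_of_mul_lt_mul_right h₂ hN)⟩

end Avoidance

section Filling

open Filter

lemma exists_continuous_isConnected_preimage_compl {Z X : Type*} [TopologicalSpace Z]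
    [LocallyConnectedSpace Z] [TopologicalSpace X] {F : Z → X} (hF : Continuous F) {q : X}
    (hq : IsClosed {q}) {W : Set Z} (hW : IsConnected W) (hWq : ∀ z ∈ W, F z ≠ q) :
    ∃ E : Z → X, Continuous E ∧ IsConnected (E ⁻¹' {q})ᶜ ∧ EqOn E F (W ∪ F ⁻¹' {q}) := by
  classical
  obtain ⟨z₀, hz₀⟩ := hW.nonempty
  set U := connectedComponentIn (F ⁻¹' {q})ᶜ z₀
  have hWU : W ⊆ U := hW.isPreconnected.subset_connectedComponentIn hz₀ hWq
  have hUq {z : Z} (hz : z ∈ U) : F z ≠ q := connectedComponentIn_subset _ _ hz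
  refine ⟨U.piecewise F fun _ ↦ q, continuous_piecewise_connectedComponentIn hF hq z₀, ?_, ?_⟩
  · have hU : IsConnected U := isConnected_connectedComponentIn_iff.2 (hWq z₀ hz₀)
    convert hU
    ext z
    by_cases hz : z ∈ U <;> simp [hz, hUq]
  · rintro z (hz | hz)
    · exact piecewise_eq_of_mem _ _ _ (hWU hz)
    · rw [piecewise_eq_of_notMem _ _ _ fun h ↦ hUq h hz, hz]

lemma mem_Ioo_of_apply_ne {α : Type*} {f : I → α} {s : I} (h₀ : f 0 ≠ f s) (h₁ : f 1 ≠ f s) :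
    s ∈ Ioo 0 1 :=
  ⟨unitInterval.pos_iff_ne_zero.2 fun h ↦ h₀ (h ▸ rfl),
    unitInterval.lt_one_iff_ne_one.2 fun h ↦ h₁ (h ▸ rfl)⟩

lemma isConnected_boundary_diff_singleton {s : I} (hs : s ∈ Ioo 0 1) :
    IsConnected {z : I × I | z.1 = 0 ∨ z.1 = 1 ∨ z.2 = 1 ∨ z.2 = 0 ∧ z.1 ≠ s} := by
  have left : IsConnected ({0} ×ˢ univ : Set (I × I)) := isConnected_singleton.prod isConnected_univ
  have right : IsConnected ({1} ×ˢ univ : Set (I × I)) :=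
    isConnected_singleton.prod isConnected_univ
  have top : IsConnected (univ ×ˢ {1} : Set (I × I)) := isConnected_univ.prod isConnected_singleton
  have before : IsConnected (Iio s ×ˢ {0} : Set (I × I)) :=
    .prod ⟨⟨0, hs.1⟩, isPreconnected_Iio⟩ isConnected_singleton
  have after : IsConnected (Ioi s ×ˢ {0} : Set (I × I)) :=
    .prod ⟨⟨1, hs.2⟩, isPreconnected_Ioi⟩ isConnected_singleton
  have union : IsConnected ({0} ×ˢ univ ∪ Iio s ×ˢ {0} ∪ univ ×ˢ {1} ∪
      ({1} ×ˢ univ ∪ Ioi s ×ˢ {0}) : Set (I × I)) :=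
    .union ⟨(1, 1), by simp⟩
      (.union ⟨(0, 1), by simp⟩ (.union ⟨(0, 0), by simpa using hs.1⟩ left before) top)
      (.union ⟨(1, 0), by simpa using hs.2⟩ right after)
  convert union using 1
  ext z
  simp only [mem_ofPred_eq, mem_union, mem_prod, mem_singleton_iff, mem_univ, mem_Iio, mem_Ioi,
    ne_iff_lt_or_gt]
  tauto

lemma eventually_exists_collapsible {A U : Set (I × I)} (hA : IsClosed A) (hU : IsOpen U)
    (hUc : IsConnected U) (hAU : A ⊆ U) (hright : ∀ t, (1, t) ∈ U) (htop : ∀ s, (s, 1) ∈ U) :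
    ∀ᶠ N in atTop, ∃ L, Collapsible N L ∧ (∀ τ ∈ L, face N τ ⊆ U) ∧
      ∀ τ, (A ∩ face N τ).Nonempty → τ ∈ L := by
  obtain ⟨C, hC, hCc, hAC, hCU⟩ := exists_isCompact_isConnected_between
    (hA.isCompact.insert (1, 1)) hU hUc (insert_subset (htop 1) hAU)
  obtain ⟨δ, hδ, hCδ⟩ := hC.exists_thickening_subset_open hU hCU
  filter_upwards [eventually_ne_atTop 0,
    tendsto_one_div_atTop_nhds_zero_nat.eventually_lt_const hδ] with N hN hNδ
  have outside_subset (τ : ℕ × ℕ) (hτ : τ ∈ outside N) : face N τ ⊆ U := by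
    rintro ⟨s, t⟩ ⟨hs, ht⟩
    obtain h | h := hτ
    · obtain rfl : s = 1 := eq_one_of_mem_strip_of_le hN h hs
      exact hright t
    · obtain rfl : t = 1 := eq_one_of_mem_strip_of_le hN h ht
      exact htop s
  have face_subset (τ : ℕ × ℕ) : (C ∩ face N τ).Nonempty → face N τ ⊆ U := by
    rintro ⟨w, hwC, hw⟩ z hz
    exact hCδ (Metric.mem_thickening_iff.2
      ⟨w, hwC, (dist_le_of_mem_face hN hz hw).trans_lt hNδ⟩)
  have corner_mem : ((1, 1) : I × I) ∈ face N (N, N) := by simp [face, strip]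
  obtain ⟨L, hL, hLU, hCL⟩ := exists_collapsible_of_isPreconnected hCc.isPreconnected
    ⟨(N, N), .inl le_rfl, (1, 1), hAC (mem_insert ..), corner_mem⟩ outside_subset face_subset
  exact ⟨L, hL, hLU, fun τ hτ ↦ hCL τ
    (hτ.mono (inter_subset_inter_left _ ((subset_insert ..).trans hAC)))⟩

lemma frequently_exists_mul_mem_Ioo {s : ℝ} (hs : s ∈ Ioo 0 1) :
    ∃ᶠ N : ℕ in atTop, ∃ k : ℕ, s * N ∈ Ioo (k : ℝ) (k + 1) := by
  refine frequently_atTop.2 fun M ↦ ?_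
  have hM : (⌊s * M⌋₊ : ℝ) ≤ s * M := Nat.floor_le (mul_nonneg hs.1.le M.cast_nonneg)
  obtain hlt | heq := hM.lt_or_eq
  · exact ⟨M, le_rfl, _, hlt, Nat.lt_floor_add_one _⟩
  · refine ⟨M + 1, M.le_succ, ⌊s * M⌋₊, ?_⟩
    rw [Nat.cast_add_one, mul_add_one]
    constructor <;> linarith [hs.1, hs.2]

variable {X : Type*} [TopologicalSpace X] [T1Space X] {p q : X}

theorem exists_homotopic_forall_ne_of_isConnected {x y : {x // x ≠ p}} {f : Path x y}
    {E : I × I → X} (hE : Continuous E) (hEc : IsConnected (E ⁻¹' {q})ᶜ)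
    (hbottom : ∀ s, E (s, 0) = f s) (hleft : ∀ t, E (0, t) ≠ q) (hright : ∀ t, E (1, t) ≠ q)
    (htop : ∀ s, E (s, 1) ≠ q) {s₀ : I} (hf : ∀ s, (f s : X) = q ↔ s = s₀) :
    ∃ f' : Path x y, f.Homotopic f' ∧ ∀ s, (f' s : X) ≠ q := by
  classical
  have hqp : q ≠ p := (hf s₀).2 rfl ▸ (f s₀).2
  have hs₀ : (s₀ : ℝ) ∈ Ioo (0 : ℝ) 1 := by
    have h₀ : E (0, 0) ≠ E (s₀, 0) := by rw [hbottom s₀, (hf s₀).2 rfl]; exact hleft 0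
    have h₁ : E (1, 0) ≠ E (s₀, 0) := by rw [hbottom s₀, (hf s₀).2 rfl]; exact hright 0
    exact mem_Ioo_of_apply_ne (f := fun s ↦ E (s, 0)) h₀ h₁
  obtain ⟨N, ⟨k, hk⟩, L, hL, hLU, hLp⟩ := ((frequently_exists_mul_mem_Ioo hs₀).and_eventually
    (eventually_exists_collapsible (isClosed_singleton.preimage hE)
      (isClosed_singleton.preimage hE).isOpen_compl hEc
      (A := E ⁻¹' {p}) (fun z hz hzq ↦ hqp (hzq.symm.trans hz)) hright htop)).exists
  -- `h` corestricts `E` to the complement of `p`; its values on `E ⁻¹' {p}` are arbitrary.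
  let h (z : I × I) : {x // x ≠ p} := if hz : E z ≠ p then ⟨E z, hz⟩ else x
  have h_eq {z : I × I} (hz : E z ≠ p) : (h z : X) = E z := congrArg Subtype.val (dif_pos hz)
  have h_ne {z : I × I} (hz : E z ≠ q) : (h z : X) ≠ q := by
    by_cases hzp : E z = p
    · simpa [h, hzp, hbottom] using hleft 0
    · rwa [h_eq hzp]
  refine exists_homotopic_forall_notMem_of_collapsible (h := h) (k := k) (Q := Subtype.val ⁻¹' {q})
    (fun s ↦ Subtype.ext ?_) hL
    (fun τ hτ ↦ ?_) (fun τ hτ z hz ↦ h_ne (hLU τ hτ hz)) (fun t ↦ h_ne (hleft t)) (fun s hs ↦ ?_)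
    fun hkL ↦ ?_
  · rw [h_eq (hbottom s ▸ (f s).2), hbottom]
  · refine Topology.IsInducing.subtypeVal.continuousOn_iff.2 ?_
    exact hE.continuousOn.congr fun z hz ↦ h_eq fun hzp ↦ hτ (hLp τ ⟨z, hzp, hz⟩)
  · rwa [(hf s).1 hs]
  · have mem : (s₀, 0) ∈ face N (k, 0) :=
      ⟨⟨hk.1.le, hk.2.le⟩, by simp [strip]⟩
    exact hLU _ hkL mem ((hbottom s₀).trans ((hf s₀).2 rfl))

theorem exists_homotopic_forall_ne {x y : {x // x ≠ p}} {f : Path x y} {g : Path (x : X) y}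
    (hfg : (f.map continuous_subtype_val).Homotopic g) (hg : ∀ s, g s ≠ q) {s₀ : I}
    (hf : ∀ s, (f s : X) = q ↔ s = s₀) :
    ∃ f' : Path x y, f.Homotopic f' ∧ ∀ s, (f' s : X) ≠ q := by
  obtain ⟨F⟩ := hfg
  have hs₀ : s₀ ∈ Ioo 0 1 := by
    have h₀ : (f 0 : X) ≠ f s₀ := by rw [f.source, (hf s₀).2 rfl, ← g.source]; exact hg 0
    have h₁ : (f 1 : X) ≠ f s₀ := by rw [f.target, (hf s₀).2 rfl, ← g.target]; exact hg 1
    exact mem_Ioo_of_apply_ne (f := fun s ↦ (f s : X)) h₀ h₁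
  have F_ne (z : I × I) (hz : z.1 = 0 ∨ z.1 = 1 ∨ z.2 = 1 ∨ z.2 = 0 ∧ z.1 ≠ s₀) :
      F (z.2, z.1) ≠ q := by
    obtain ⟨s, t⟩ := z
    obtain rfl | rfl | rfl | ⟨rfl, hs⟩ := hz
    · simpa using hg 0
    · simpa using hg 1
    · simpa using hg s
    · simpa [hf] using hs
  obtain ⟨E, hE, hEc, hEF⟩ := exists_continuous_isConnected_preimage_compl
    (F := fun z : I × I ↦ F (z.2, z.1)) (by fun_prop) (isClosed_singleton (x := q))
    (isConnected_boundary_diff_singleton hs₀) F_ne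
  have E_ne (z : I × I) (hz : z.1 = 0 ∨ z.1 = 1 ∨ z.2 = 1) : E z ≠ q := by
    rw [hEF (.inl (by tauto))]
    exact F_ne z (by tauto)
  refine exists_homotopic_forall_ne_of_isConnected hE hEc (fun s ↦ ?_) (fun t ↦ E_ne _ (by simp))
    (fun t ↦ E_ne _ (by simp)) (fun s ↦ E_ne _ (by simp)) hf
  have hsF : ((s, 0) : I × I) ∈ {z : I × I | z.1 = 0 ∨ z.1 = 1 ∨ z.2 = 1 ∨ z.2 = 0 ∧ z.1 ≠ s₀} ∪
      (fun z ↦ F (z.2, z.1)) ⁻¹' {q} := by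
    by_cases hs : s = s₀ <;> simp [hs, hf]
  simpa using hEF hsF

end Filling

end PointRemoval

theorem stmt_0_general {X : Type*} [TopologicalSpace X] [T1Space X] {p₀ p₁ pstar : X}
    {f : unitInterval → X} (hf : Continuous f) (hf0 : f 0 = p₁) (hf1 : f 1 = p₁)
    (hp₀ : p₀ ∉ Set.range f) (hsingle : ∃ s₀ : unitInterval, f ⁻¹' {pstar} = {s₀})
    (hnull : ∃ F : unitInterval × unitInterval → X, Continuous F ∧
      (∀ s, F (s, 0) = f s) ∧ (∀ s, F (s, 1) = p₁) ∧
      (∀ t, F (0, t) = p₁) ∧ (∀ t, F (1, t) = p₁)) :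
    ∃ (f' : unitInterval → X) (H : unitInterval × unitInterval → X),
      Continuous f' ∧ f' 0 = p₁ ∧ f' 1 = p₁ ∧
      Set.range f' ⊆ {p₀, pstar}ᶜ ∧
      Continuous H ∧ (∀ s, H (s, 0) = f s) ∧ (∀ s, H (s, 1) = f' s) ∧
      (∀ t, H (0, t) = p₁) ∧ (∀ t, H (1, t) = p₁) ∧
      Set.range H ⊆ {p₀}ᶜ := by
  obtain ⟨s₀, hs₀⟩ := hsingle
  obtain ⟨F, hF, F_bottom, F_top, F_left, F_right⟩ := hnull
  have hf_iff (s : unitInterval) : f s = pstar ↔ s = s₀ := Set.ext_iff.1 hs₀ s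
  have hp₁ : p₁ ≠ p₀ := fun h ↦ hp₀ ⟨0, hf0.trans h⟩
  have hp₁' : p₁ ≠ pstar := fun h ↦ zero_ne_one
    (((hf_iff 0).1 (hf0.trans h)).trans ((hf_iff 1).1 (hf1.trans h)).symm)
  let γ : Path (⟨p₁, hp₁⟩ : {x // x ≠ p₀}) ⟨p₁, hp₁⟩ :=
    { toFun s := ⟨f s, fun h ↦ hp₀ ⟨s, h⟩⟩
      source' := Subtype.ext hf0
      target' := Subtype.ext hf1 }
  have hγ : (γ.map continuous_subtype_val).Homotopic (Path.refl p₁) := ⟨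
    { toFun z := F (z.2, z.1)
      map_zero_left := F_bottom
      map_one_left := F_top
      prop' t := by rintro s (rfl | rfl) <;> simp [*] }⟩
  obtain ⟨γ', ⟨H⟩, hγ'⟩ :=
    PointRemoval.exists_homotopic_forall_ne hγ (fun _ ↦ hp₁') hf_iff
  refine ⟨fun s ↦ γ' s, fun z ↦ H (z.2, z.1), by fun_prop, by simp, by simp, ?_, by fun_prop,
    fun s ↦ by simp [γ], fun s ↦ by simp, fun t ↦ by simp, fun t ↦ by simp, ?_⟩
  · rintro _ ⟨s, rfl⟩
    simpa using ⟨(γ' s).2, hγ' s⟩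
  · rintro _ ⟨z, rfl⟩
    exact (H (z.2, z.1)).2

/-- Lemma (Eda–Karimov–Repovš, correction of Lemma 3.2): if a loop `f` at `p₁` in a
Hausdorff space misses `p₀`, hits `p*` exactly once, and is null-homotopic rel
endpoints, then there is a loop `f'` at `p₁` avoiding both `p₀` and `p*` which is
homotopic to `f` rel endpoints within `X \ {p₀}`. -/
theorem stmt_0 {X : Type*} [TopologicalSpace X] [T2Space X]
    (p₀ p₁ pstar : X) (h01 : p₀ ≠ p₁) (h0s : p₀ ≠ pstar) (h1s : p₁ ≠ pstar)
    (f : unitInterval → X) (hf : Continuous f)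
    (hf0 : f 0 = p₁) (hf1 : f 1 = p₁)
    (hp₀ : p₀ ∉ Set.range f)
    (hsingle : ∃ s₀ : unitInterval, f ⁻¹' {pstar} = {s₀})
    (hnull : ∃ F : unitInterval × unitInterval → X, Continuous F ∧
      (∀ s, F (s, 0) = f s) ∧ (∀ s, F (s, 1) = p₁) ∧
      (∀ t, F (0, t) = p₁) ∧ (∀ t, F (1, t) = p₁)) :
    ∃ (f' : unitInterval → X) (H : unitInterval × unitInterval → X),
      Continuous f' ∧ f' 0 = p₁ ∧ f' 1 = p₁ ∧
      Set.range f' ⊆ {p₀, pstar}ᶜ ∧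
      Continuous H ∧ (∀ s, H (s, 0) = f s) ∧ (∀ s, H (s, 1) = f' s) ∧
      (∀ t, H (0, t) = p₁) ∧ (∀ t, H (1, t) = p₁) ∧
      Set.range H ⊆ {p₀}ᶜ :=
  stmt_0_general hf hf0 hf1 hp₀ hsingle hnull
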